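/- In the logic for DB-ASMs, parallel composition of DB-ASM rules is commutative and associative and sequential composition is associative: (r) par r₁ r₂ endpar ≡ par r₂ r₁ endpar; (s) par (par r₁ r₂ endpar) r₃ endpar ≡ par r₁ (par r₂ r₃ endpar) endpar; (t) seq (seq r₁ r₂ endseq) r₃ endseq ≡ seq r₁ (seq r₂ r₃ endseq) endseq. -/

import Mathlib

set_option maxHeartbeats 1000000

namespace DBASM

/-- A signature of meta-finite states: a finite set `F` of dynamic function
symbols (all unary; arguments are read as tuples), static function symbols
`Stat` and location-operator names `Rho`. -/
structure Sig where
  F : Type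
  Stat : Type
  Rho : Type
  [fintypeF : Fintype F]
  [deqF : DecidableEq F]

attribute [instance] Sig.fintypeF Sig.deqF

variable {σ : Sig} {B : Type}

/-- A meta-finite state (interpretation) over the base set `B`: a finite
database part `db`, interpretations of the dynamic and static function
symbols, and interpretations of the location operators as multiset
functions. -/
structure Interp (σ : Sig) (B : Type) where
  db : Set B
  db_fin : db.Finite
  dyn : σ.F → B → B
  stat : σ.Stat → B → B
  lop : σ.Rho → Multiset B → B

/-- An update `(f, a, b)`: the location `(f, a)` gets the value `b`. -/
abbrev Upd (σ : Sig) (B : Type) := σ.F × B × B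

/-- An update set. -/
abbrev USet (σ : Sig) (B : Type) := Set (Upd σ B)

/-- An update multiset, represented by its multiplicity function. -/
abbrev UMul (σ : Sig) (B : Type) := Upd σ B → ℕ

/-- Consistency of an update set. -/
def consistentU (Δ : USet σ B) : Prop :=
  ∀ (f : σ.F) (a b b' : B), (f, a, b) ∈ Δ → (f, a, b') ∈ Δ → b = b'

open Classical in
/-- The successor state `S + Δ`. -/
noncomputable def Interp.apply (I : Interp σ B) (Δ : USet σ B) : Interp σ B :=
  { I with dyn := fun f a => if h : ∃ b, (f, a, b) ∈ Δ then h.choose else I.dyn f a }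

/-- A (first-order) variable assignment: `dbv` interprets the database
variables, `av` the algorithmic variables. -/
structure Asg (B : Type) where
  dbv : ℕ → B
  av : ℕ → B

def Asg.updDb (ζ : Asg B) (x : ℕ) (a : B) : Asg B :=
  { ζ with dbv := Function.update ζ.dbv x a }

def Asg.updA (ζ : Asg B) (x : ℕ) (a : B) : Asg B :=
  { ζ with av := Function.update ζ.av x a }

/-- Pure terms (terms of the first-order logic of meta-finite states). -/
inductive PTerm (σ : Sig) : Type where
  | var : ℕ → PTerm σ
  | avar : ℕ → PTerm σ
  | dyn : σ.F → PTerm σ → PTerm σ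
  | stat : σ.Stat → PTerm σ → PTerm σ

/-- Pure formulae (first-order formulae of meta-finite states). -/
inductive PFml (σ : Sig) : Type where
  | eq : PTerm σ → PTerm σ → PFml σ
  | not : PFml σ → PFml σ
  | and : PFml σ → PFml σ → PFml σ
  | allDb : ℕ → PFml σ → PFml σ
  | allA : ℕ → PFml σ → PFml σ

/-- DB-ASM rules. -/
inductive Rule (σ : Sig) : Type where
  | assign : σ.F → PTerm σ → PTerm σ → Rule σ
  | cond : PFml σ → Rule σ → Rule σ
  | forall_ : ℕ → PFml σ → Rule σ → Rule σ
  | choose : ℕ → PFml σ → Rule σ → Rule σ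
  | par : Rule σ → Rule σ → Rule σ
  | seq : Rule σ → Rule σ → Rule σ
  | letr : σ.F → PTerm σ → σ.Rho → Rule σ → Rule σ

def PTerm.val : PTerm σ → Interp σ B → Asg B → B
  | .var x, _, ζ => ζ.dbv x
  | .avar x, _, ζ => ζ.av x
  | .dyn f t, I, ζ => I.dyn f (t.val I ζ)
  | .stat g t, I, ζ => I.stat g (t.val I ζ)

def PFml.val : PFml σ → Interp σ B → Asg B → Prop
  | .eq s t, I, ζ => s.val I ζ = t.val I ζ
  | .not φ, I, ζ => ¬ φ.val I ζ
  | .and φ ψ, I, ζ => φ.val I ζ ∧ ψ.val I ζ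
  | .allDb x φ, I, ζ => ∀ a ∈ I.db, φ.val I (ζ.updDb x a)
  | .allA x φ, I, ζ => ∀ a : B, φ.val I (ζ.updA x a)

/-- The update set obtained from an update multiset by forgetting multiplicities. -/
def mulToSet (D : UMul σ B) : USet σ B := { u | D u ≠ 0 }

open Classical in
/-- The multiset of values assigned by an update multiset to the location `(f, a)`. -/
noncomputable def mulVals (D : UMul σ B) (f : σ.F) (a : B) : Multiset B :=
  if h : (Function.support fun b => D (f, a, b)).Finite then
    h.toFinset.val.bind (fun b => Multiset.replicate (D (f, a, b)) b)
  else 0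

/-- Sequential composition `Δ₁ ⊘ Δ₂` of update sets. -/
def seqComp (Δ₁ Δ₂ : USet σ B) : USet σ B :=
  Δ₂ ∪ { u | u ∈ Δ₁ ∧ ∀ b : B, (u.1, u.2.1, b) ∉ Δ₂ }

open Classical in
/-- Sequential composition `Δ̈₁ ⊘ Δ̈₂` of update multisets. -/
noncomputable def mseqComp (D₁ D₂ : UMul σ B) : UMul σ B :=
  fun u => D₂ u + if ∀ b : B, D₂ (u.1, u.2.1, b) = 0 then D₁ u else 0

open Classical in
/-- Collapsing an update multiset to an update set, aggregating the values at
the location `(f, a)` by the location operator `ρ`. -/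
noncomputable def scollapse (I : Interp σ B) (f : σ.F) (a : B) (ρ : σ.Rho)
    (D : UMul σ B) : USet σ B :=
  {u | u = (f, a, I.lop ρ (mulVals D f a))} ∪
    { u | D u ≠ 0 ∧ ¬ (u.1 = f ∧ u.2.1 = a) }

open Classical in
/-- Collapsing inside an update multiset (for the let rule). -/
noncomputable def mcollapse (I : Interp σ B) (f : σ.F) (a : B) (ρ : σ.Rho)
    (D : UMul σ B) : UMul σ B :=
  fun u =>
    if u.1 = f ∧ u.2.1 = a then
      (if u.2.2 = I.lop ρ (mulVals D f a) then 1 else 0)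
    else D u

open Classical in
/-- The set `Δ̈(r, S, ζ)` of update multisets yielded by a DB-ASM rule. -/
noncomputable def updMuls : Rule σ → Interp σ B → Asg B → Set (UMul σ B)
  | .assign f t s, I, ζ =>
      { D | D = fun u => if u = (f, t.val I ζ, s.val I ζ) then 1 else 0 }
  | .cond φ r, I, ζ =>
      if φ.val I ζ then updMuls r I ζ else { D | D = fun _ => 0 }
  | .forall_ x φ r, I, ζ =>
      { D | ∃ g : B → UMul σ B,
          (∀ a ∈ I.db, (φ.val I (ζ.updDb x a)) → g a ∈ updMuls r I (ζ.updDb x a)) ∧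
          (∀ a : B, ¬ (a ∈ I.db ∧ φ.val I (ζ.updDb x a)) → g a = fun _ => 0) ∧
          D = fun u => ∑ a ∈ I.db_fin.toFinset, g a u }
  | .choose x φ r, I, ζ =>
      { D | ∃ a ∈ I.db, φ.val I (ζ.updDb x a) ∧ D ∈ updMuls r I (ζ.updDb x a) }
  | .par r₁ r₂, I, ζ =>
      { D | ∃ D₁ ∈ updMuls r₁ I ζ, ∃ D₂ ∈ updMuls r₂ I ζ,
          D = fun u => D₁ u + D₂ u }
  | .seq r₁ r₂, I, ζ =>
      { D | ∃ D₁ ∈ updMuls r₁ I ζ, consistentU (mulToSet D₁) ∧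
            ∃ D₂ ∈ updMuls r₂ (I.apply (mulToSet D₁)) ζ, D = mseqComp D₁ D₂ } ∪
      { D₁ | D₁ ∈ updMuls r₁ I ζ ∧ ¬ consistentU (mulToSet D₁) }
  | .letr f t ρ r, I, ζ =>
      { D | ∃ D' ∈ updMuls r I ζ, D = mcollapse I f (t.val I ζ) ρ D' }

open Classical in
/-- The set `Δ(r, S, ζ)` of update sets yielded by a DB-ASM rule. -/
noncomputable def updSets : Rule σ → Interp σ B → Asg B → Set (USet σ B)
  | .assign f t s, I, ζ => { Δ | Δ = {(f, t.val I ζ, s.val I ζ)} }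
  | .cond φ r, I, ζ =>
      if φ.val I ζ then updSets r I ζ else { Δ | Δ = ∅ }
  | .forall_ x φ r, I, ζ =>
      { Δ | ∃ g : B → USet σ B,
          (∀ a ∈ I.db, (φ.val I (ζ.updDb x a)) → g a ∈ updSets r I (ζ.updDb x a)) ∧
          Δ = ⋃ a ∈ { a ∈ I.db | φ.val I (ζ.updDb x a) }, g a }
  | .choose x φ r, I, ζ =>
      { Δ | ∃ a ∈ I.db, φ.val I (ζ.updDb x a) ∧ Δ ∈ updSets r I (ζ.updDb x a) }
  | .par r₁ r₂, I, ζ =>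
      { Δ | ∃ Δ₁ ∈ updSets r₁ I ζ, ∃ Δ₂ ∈ updSets r₂ I ζ, Δ = Δ₁ ∪ Δ₂ }
  | .seq r₁ r₂, I, ζ =>
      { Δ | ∃ Δ₁ ∈ updSets r₁ I ζ, consistentU Δ₁ ∧
            ∃ Δ₂ ∈ updSets r₂ (I.apply Δ₁) ζ, Δ = seqComp Δ₁ Δ₂ } ∪
      { Δ₁ | Δ₁ ∈ updSets r₁ I ζ ∧ ¬ consistentU Δ₁ }
  | .letr f t ρ r, I, ζ =>
      { Δ | ∃ D ∈ updMuls r I ζ, Δ = scollapse I f (t.val I ζ) ρ D }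


mutual
/-- Terms of the logic for DB-ASMs (including ρ-terms). -/
inductive LTerm (σ : Sig) : Type where
  | var : ℕ → LTerm σ
  | avar : ℕ → LTerm σ
  | dyn : σ.F → LTerm σ → LTerm σ
  | stat : σ.Stat → LTerm σ → LTerm σ
  | rho : σ.Rho → ℕ → LTerm σ → Fml σ → LTerm σ

/-- Formulae of the logic for DB-ASMs. -/
inductive Fml (σ : Sig) : Type where
  | eq : LTerm σ → LTerm σ → Fml σ
  | not : Fml σ → Fml σ
  | and : Fml σ → Fml σ → Fml σ
  | allDb : ℕ → Fml σ → Fml σ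
  | allA : ℕ → Fml σ → Fml σ
  | allM : ℕ → Fml σ → Fml σ
  | allX : ℕ → Fml σ → Fml σ
  | allXc : ℕ → Fml σ → Fml σ
  | allXm : ℕ → Fml σ → Fml σ
  | allXmc : ℕ → Fml σ → Fml σ
  | allF : ℕ → Fml σ → Fml σ
  | allG : ℕ → Fml σ → Fml σ
  | upd : Rule σ → ℕ → Fml σ
  | upm : Rule σ → ℕ → Fml σ
  | memM : ℕ → LTerm σ → LTerm σ → Fml σ
  | memX : ℕ → σ.F → LTerm σ → LTerm σ → Fml σ
  | memXc : ℕ → σ.F → LTerm σ → LTerm σ → LTerm σ → Fml σ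
  | memXm : ℕ → σ.F → LTerm σ → LTerm σ → LTerm σ → Fml σ
  | memXmc : ℕ → σ.F → LTerm σ → LTerm σ → LTerm σ → LTerm σ → Fml σ
  | memF : ℕ → σ.F → LTerm σ → LTerm σ → LTerm σ → LTerm σ → LTerm σ → LTerm σ → LTerm σ → Fml σ
  | memG : ℕ → σ.F → LTerm σ → LTerm σ → LTerm σ → LTerm σ → LTerm σ → LTerm σ → LTerm σ → Fml σ
  | box : ℕ → Fml σ → Fml σ
end

/-- Second-order variable assignment (one namespace per kind of
second-order variable). -/
structure SOAsg (σ : Sig) (B : Type) where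
  m : ℕ → Set (B × B)
  x : ℕ → USet σ B
  xc : ℕ → Set (σ.F × B × B × B)
  xm : ℕ → Set (σ.F × B × B × B)
  xmc : ℕ → Set (σ.F × B × B × B × B)
  fv : ℕ → Set (σ.F × B × B × B × B × B × B × B)
  gv : ℕ → Set (σ.F × B × B × B × B × B × B × B)

/-- A second-order assignment is admissible if all its values are finite sets. -/
def SOAsg.Fin (Ξ : SOAsg σ B) : Prop :=
  (∀ n, (Ξ.m n).Finite) ∧ (∀ n, (Ξ.x n).Finite) ∧ (∀ n, (Ξ.xc n).Finite) ∧
  (∀ n, (Ξ.xm n).Finite) ∧ (∀ n, (Ξ.xmc n).Finite) ∧ (∀ n, (Ξ.fv n).Finite) ∧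
  (∀ n, (Ξ.gv n).Finite)

def SOAsg.uM (Ξ : SOAsg σ B) (n : ℕ) (P : Set (B × B)) : SOAsg σ B :=
  { Ξ with m := Function.update Ξ.m n P }
def SOAsg.uX (Ξ : SOAsg σ B) (n : ℕ) (P : USet σ B) : SOAsg σ B :=
  { Ξ with x := Function.update Ξ.x n P }
def SOAsg.uXc (Ξ : SOAsg σ B) (n : ℕ) (P : Set (σ.F × B × B × B)) : SOAsg σ B :=
  { Ξ with xc := Function.update Ξ.xc n P }
def SOAsg.uXm (Ξ : SOAsg σ B) (n : ℕ) (P : Set (σ.F × B × B × B)) : SOAsg σ B :=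
  { Ξ with xm := Function.update Ξ.xm n P }
def SOAsg.uXmc (Ξ : SOAsg σ B) (n : ℕ) (P : Set (σ.F × B × B × B × B)) : SOAsg σ B :=
  { Ξ with xmc := Function.update Ξ.xmc n P }
def SOAsg.uF (Ξ : SOAsg σ B) (n : ℕ) (P : Set (σ.F × B × B × B × B × B × B × B)) : SOAsg σ B :=
  { Ξ with fv := Function.update Ξ.fv n P }
def SOAsg.uG (Ξ : SOAsg σ B) (n : ℕ) (P : Set (σ.F × B × B × B × B × B × B × B)) : SOAsg σ B :=
  { Ξ with gv := Function.update Ξ.gv n P }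

open Classical in
mutual
/-- Value of a term of the logic for DB-ASMs. -/
noncomputable def lval (I : Interp σ B) (ζ : Asg B) (Ξ : SOAsg σ B) : LTerm σ → B
  | .var x => ζ.dbv x
  | .avar x => ζ.av x
  | .dyn f t => I.dyn f (lval I ζ Ξ t)
  | .stat g t => I.stat g (lval I ζ Ξ t)
  | .rho ρ x t φ =>
      I.lop ρ (Multiset.map (fun a => lval I (ζ.updDb x a) Ξ t)
        (Multiset.filter (fun a => fval I (ζ.updDb x a) Ξ φ) I.db_fin.toFinset.val))

/-- Truth value of a formula of the logic for DB-ASMs. -/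
noncomputable def fval (I : Interp σ B) (ζ : Asg B) (Ξ : SOAsg σ B) : Fml σ → Prop
  | .eq s t => lval I ζ Ξ s = lval I ζ Ξ t
  | .not φ => ¬ fval I ζ Ξ φ
  | .and φ ψ => fval I ζ Ξ φ ∧ fval I ζ Ξ ψ
  | .allDb x φ => ∀ a ∈ I.db, fval I (ζ.updDb x a) Ξ φ
  | .allA x φ => ∀ a : B, fval I (ζ.updA x a) Ξ φ
  | .allM n φ => ∀ P : Set (B × B), P.Finite → fval I ζ (Ξ.uM n P) φ
  | .allX n φ => ∀ P : USet σ B, P.Finite → fval I ζ (Ξ.uX n P) φ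
  | .allXc n φ => ∀ P : Set (σ.F × B × B × B), P.Finite → fval I ζ (Ξ.uXc n P) φ
  | .allXm n φ => ∀ P : Set (σ.F × B × B × B), P.Finite → fval I ζ (Ξ.uXm n P) φ
  | .allXmc n φ => ∀ P : Set (σ.F × B × B × B × B), P.Finite → fval I ζ (Ξ.uXmc n P) φ
  | .allF n φ => ∀ P : Set (σ.F × B × B × B × B × B × B × B), P.Finite → fval I ζ (Ξ.uF n P) φ
  | .allG n φ => ∀ P : Set (σ.F × B × B × B × B × B × B × B), P.Finite → fval I ζ (Ξ.uG n P) φ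
  | .upd r n => Ξ.x n ∈ updSets r I ζ
  | .upm r n =>
      (fun u : Upd σ B => {ta : B | (u.1, u.2.1, u.2.2, ta) ∈ Ξ.xm n}.ncard) ∈ updMuls r I ζ
  | .memM n s t => (lval I ζ Ξ s, lval I ζ Ξ t) ∈ Ξ.m n
  | .memX n f t t0 => (f, lval I ζ Ξ t, lval I ζ Ξ t0) ∈ Ξ.x n
  | .memXc n f t t0 s => (f, lval I ζ Ξ t, lval I ζ Ξ t0, lval I ζ Ξ s) ∈ Ξ.xc n
  | .memXm n f t t0 ta => (f, lval I ζ Ξ t, lval I ζ Ξ t0, lval I ζ Ξ ta) ∈ Ξ.xm n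
  | .memXmc n f t t0 ta s =>
      (f, lval I ζ Ξ t, lval I ζ Ξ t0, lval I ζ Ξ ta, lval I ζ Ξ s) ∈ Ξ.xmc n
  | .memF n f t1 t2 t3 t4 t5 t6 t7 =>
      (f, lval I ζ Ξ t1, lval I ζ Ξ t2, lval I ζ Ξ t3, lval I ζ Ξ t4,
        lval I ζ Ξ t5, lval I ζ Ξ t6, lval I ζ Ξ t7) ∈ Ξ.fv n
  | .memG n f t1 t2 t3 t4 t5 t6 t7 =>
      (f, lval I ζ Ξ t1, lval I ζ Ξ t2, lval I ζ Ξ t3, lval I ζ Ξ t4,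
        lval I ζ Ξ t5, lval I ζ Ξ t6, lval I ζ Ξ t7) ∈ Ξ.gv n
  | .box n φ => ¬ consistentU (Ξ.x n) ∨ fval (I.apply (Ξ.x n)) ζ Ξ φ
end
namespace Fml

def imp (φ ψ : Fml σ) : Fml σ := .not (.and φ (.not ψ))
def or (φ ψ : Fml σ) : Fml σ := .not (.and (.not φ) (.not ψ))
def iff (φ ψ : Fml σ) : Fml σ := .and (imp φ ψ) (imp ψ φ)
def exDb (x : ℕ) (φ : Fml σ) : Fml σ := .not (.allDb x (.not φ))
def exA (x : ℕ) (φ : Fml σ) : Fml σ := .not (.allA x (.not φ))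
def exM (n : ℕ) (φ : Fml σ) : Fml σ := .not (.allM n (.not φ))
def exX (n : ℕ) (φ : Fml σ) : Fml σ := .not (.allX n (.not φ))
def exXc (n : ℕ) (φ : Fml σ) : Fml σ := .not (.allXc n (.not φ))
def exXm (n : ℕ) (φ : Fml σ) : Fml σ := .not (.allXm n (.not φ))
def exXmc (n : ℕ) (φ : Fml σ) : Fml σ := .not (.allXmc n (.not φ))
def exF (n : ℕ) (φ : Fml σ) : Fml σ := .not (.allF n (.not φ))
def exG (n : ℕ) (φ : Fml σ) : Fml σ := .not (.allG n (.not φ))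

def tt : Fml σ := .eq (.var 0) (.var 0)

def bigAnd : List (Fml σ) → Fml σ
  | [] => tt
  | [φ] => φ
  | φ :: l => .and φ (bigAnd l)

/-- Conjunction over all dynamic function symbols. -/
noncomputable def allFdyn (k : σ.F → Fml σ) : Fml σ :=
  bigAnd ((Finset.univ : Finset σ.F).toList.map k)

/-- Conjunction over all dynamic function symbols different from `f`. -/
noncomputable def allFdynNe (f : σ.F) (k : σ.F → Fml σ) : Fml σ :=
  bigAnd (((Finset.univ : Finset σ.F).erase f).toList.map k)

def allAs (l : List ℕ) (φ : Fml σ) : Fml σ := l.foldr Fml.allA φ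
def exAs (l : List ℕ) (φ : Fml σ) : Fml σ := l.foldr exA φ

end Fml

/-- Embedding of pure terms into terms of the logic. -/
def PTerm.toL : PTerm σ → LTerm σ
  | .var x => .var x
  | .avar x => .avar x
  | .dyn f t => .dyn f t.toL
  | .stat g t => .stat g t.toL

/-- Embedding of pure formulae into formulae of the logic. -/
def PFml.toF : PFml σ → Fml σ
  | .eq s t => .eq s.toL t.toL
  | .not φ => .not φ.toF
  | .and φ ψ => .and φ.toF ψ.toF
  | .allDb x φ => .allDb x φ.toF
  | .allA x φ => .allA x φ.toF

/-- A strict upper bound for the first-order variables occurring in a pure term. -/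
def PTerm.bnd : PTerm σ → ℕ
  | .var x => x + 1
  | .avar x => x + 1
  | .dyn _ t => t.bnd
  | .stat _ t => t.bnd

def PFml.bnd : PFml σ → ℕ
  | .eq s t => max s.bnd t.bnd
  | .not φ => φ.bnd
  | .and φ ψ => max φ.bnd ψ.bnd
  | .allDb x φ => max (x + 1) φ.bnd
  | .allA x φ => max (x + 1) φ.bnd

def Rule.bnd : Rule σ → ℕ
  | .assign _ t s => max t.bnd s.bnd
  | .cond φ r => max φ.bnd r.bnd
  | .forall_ x φ r => max (x + 1) (max φ.bnd r.bnd)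
  | .choose x φ r => max (x + 1) (max φ.bnd r.bnd)
  | .par r₁ r₂ => max r₁.bnd r₂.bnd
  | .seq r₁ r₂ => max r₁.bnd r₂.bnd
  | .letr _ t _ r => max t.bnd r.bnd

/-- Renaming of a free database variable `x` into `y` in a pure term. -/
def PTerm.rename (x y : ℕ) : PTerm σ → PTerm σ
  | .var z => if z = x then .var y else .var z
  | .avar z => .avar z
  | .dyn f t => .dyn f (t.rename x y)
  | .stat g t => .stat g (t.rename x y)

def PFml.rename (x y : ℕ) : PFml σ → PFml σ
  | .eq s t => .eq (s.rename x y) (t.rename x y)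
  | .not φ => .not (φ.rename x y)
  | .and φ ψ => .and (φ.rename x y) (ψ.rename x y)
  | .allDb z φ => if z = x then .allDb z φ else .allDb z (φ.rename x y)
  | .allA z φ => .allA z (φ.rename x y)

def Rule.rename (x y : ℕ) : Rule σ → Rule σ
  | .assign f t s => .assign f (t.rename x y) (s.rename x y)
  | .cond φ r => .cond (φ.rename x y) (r.rename x y)
  | .forall_ z φ r =>
      if z = x then .forall_ z φ r else .forall_ z (φ.rename x y) (r.rename x y)
  | .choose z φ r =>
      if z = x then .choose z φ r else .choose z (φ.rename x y) (r.rename x y)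
  | .par r₁ r₂ => .par (r₁.rename x y) (r₂.rename x y)
  | .seq r₁ r₂ => .seq (r₁.rename x y) (r₂.rename x y)
  | .letr f t ρ r => .letr f (t.rename x y) ρ (r.rename x y)

mutual
/-- The free second-order variables of kind `X` (update-set variables) of a term. -/
def LTerm.freeX : LTerm σ → Set ℕ
  | .var _ => ∅
  | .avar _ => ∅
  | .dyn _ t => t.freeX
  | .stat _ t => t.freeX
  | .rho _ _ t φ => t.freeX ∪ φ.freeX

/-- The free second-order variables of kind `X` (update-set variables) of a formula. -/
def Fml.freeX : Fml σ → Set ℕ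
  | .eq s t => s.freeX ∪ t.freeX
  | .not φ => φ.freeX
  | .and φ ψ => φ.freeX ∪ ψ.freeX
  | .allDb _ φ => φ.freeX
  | .allA _ φ => φ.freeX
  | .allM _ φ => φ.freeX
  | .allX n φ => φ.freeX \ {n}
  | .allXc _ φ => φ.freeX
  | .allXm _ φ => φ.freeX
  | .allXmc _ φ => φ.freeX
  | .allF _ φ => φ.freeX
  | .allG _ φ => φ.freeX
  | .upd _ n => {n}
  | .upm _ _ => ∅
  | .memM _ s t => s.freeX ∪ t.freeX
  | .memX n _ t t0 => {n} ∪ t.freeX ∪ t0.freeX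
  | .memXc _ _ t t0 s => t.freeX ∪ t0.freeX ∪ s.freeX
  | .memXm _ _ t t0 ta => t.freeX ∪ t0.freeX ∪ ta.freeX
  | .memXmc _ _ t t0 ta s => t.freeX ∪ t0.freeX ∪ ta.freeX ∪ s.freeX
  | .memF _ _ t1 t2 t3 t4 t5 t6 t7 =>
      t1.freeX ∪ t2.freeX ∪ t3.freeX ∪ t4.freeX ∪ t5.freeX ∪ t6.freeX ∪ t7.freeX
  | .memG _ _ t1 t2 t3 t4 t5 t6 t7 =>
      t1.freeX ∪ t2.freeX ∪ t3.freeX ∪ t4.freeX ∪ t5.freeX ∪ t6.freeX ∪ t7.freeX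
  | .box n φ => {n} ∪ φ.freeX
end

mutual
/-- A strict upper bound for all first-order variables occurring in a term. -/
def LTerm.bndF : LTerm σ → ℕ
  | .var x => x + 1
  | .avar x => x + 1
  | .dyn _ t => t.bndF
  | .stat _ t => t.bndF
  | .rho _ x t φ => max (x + 1) (max t.bndF φ.bndF)

/-- A strict upper bound for all first-order variables occurring in a formula. -/
def Fml.bndF : Fml σ → ℕ
  | .eq s t => max s.bndF t.bndF
  | .not φ => φ.bndF
  | .and φ ψ => max φ.bndF ψ.bndF
  | .allDb x φ => max (x + 1) φ.bndF
  | .allA x φ => max (x + 1) φ.bndF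
  | .allM _ φ => φ.bndF
  | .allX _ φ => φ.bndF
  | .allXc _ φ => φ.bndF
  | .allXm _ φ => φ.bndF
  | .allXmc _ φ => φ.bndF
  | .allF _ φ => φ.bndF
  | .allG _ φ => φ.bndF
  | .upd r _ => r.bnd
  | .upm r _ => r.bnd
  | .memM _ s t => max s.bndF t.bndF
  | .memX _ _ t t0 => max t.bndF t0.bndF
  | .memXc _ _ t t0 s => max t.bndF (max t0.bndF s.bndF)
  | .memXm _ _ t t0 ta => max t.bndF (max t0.bndF ta.bndF)
  | .memXmc _ _ t t0 ta s => max (max t.bndF t0.bndF) (max ta.bndF s.bndF)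
  | .memF _ _ t1 t2 t3 t4 t5 t6 t7 =>
      max (max (max t1.bndF t2.bndF) (max t3.bndF t4.bndF))
        (max (max t5.bndF t6.bndF) t7.bndF)
  | .memG _ _ t1 t2 t3 t4 t5 t6 t7 =>
      max (max (max t1.bndF t2.bndF) (max t3.bndF t4.bndF))
        (max (max t5.bndF t6.bndF) t7.bndF)
  | .box _ φ => φ.bndF
end

mutual
/-- Purity of a term: no ρ-subterms. -/
def LTerm.isPure : LTerm σ → Prop
  | .var _ => True
  | .avar _ => True
  | .dyn _ t => t.isPure
  | .stat _ t => t.isPure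
  | .rho _ _ _ _ => False

/-- A pure formula: built from equations between ρ-free terms by `¬`, `∧`
and first-order quantification only. -/
def Fml.isPure : Fml σ → Prop
  | .eq s t => s.isPure ∧ t.isPure
  | .not φ => φ.isPure
  | .and φ ψ => φ.isPure ∧ ψ.isPure
  | .allDb _ φ => φ.isPure
  | .allA _ φ => φ.isPure
  | _ => False
end

mutual
/-- A static term: contains no dynamic function symbols. -/
def LTerm.isStatic : LTerm σ → Prop
  | .var _ => True
  | .avar _ => True
  | .dyn _ _ => False
  | .stat _ t => t.isStatic
  | .rho _ _ t φ => t.isStatic ∧ φ.isStatic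

/-- A static formula: contains no dynamic function symbols. -/
def Fml.isStatic : Fml σ → Prop
  | .eq s t => s.isStatic ∧ t.isStatic
  | .not φ => φ.isStatic
  | .and φ ψ => φ.isStatic ∧ ψ.isStatic
  | .allDb _ φ => φ.isStatic
  | .allA _ φ => φ.isStatic
  | _ => False
end

mutual
/-- Whether a term contains a subformula of the form `upd(r, X)`
(flag `true`) or `upm(r, Ẍ)` (flag `false`). -/
def LTerm.hasR (b : Bool) : LTerm σ → Prop
  | .var _ => False
  | .avar _ => False
  | .dyn _ t => t.hasR b
  | .stat _ t => t.hasR b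
  | .rho _ _ t φ => t.hasR b ∨ φ.hasR b

/-- Whether a formula contains a subformula of the form `upd(r, X)`
(flag `true`) or `upm(r, Ẍ)` (flag `false`). -/
def Fml.hasR (b : Bool) : Fml σ → Prop
  | .eq s t => s.hasR b ∨ t.hasR b
  | .not φ => φ.hasR b
  | .and φ ψ => φ.hasR b ∨ ψ.hasR b
  | .allDb _ φ => φ.hasR b
  | .allA _ φ => φ.hasR b
  | .allM _ φ => φ.hasR b
  | .allX _ φ => φ.hasR b
  | .allXc _ φ => φ.hasR b
  | .allXm _ φ => φ.hasR b
  | .allXmc _ φ => φ.hasR b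
  | .allF _ φ => φ.hasR b
  | .allG _ φ => φ.hasR b
  | .upd _ _ => b = true
  | .upm _ _ => b = false
  | .memM _ s t => s.hasR b ∨ t.hasR b
  | .memX _ _ t t0 => t.hasR b ∨ t0.hasR b
  | .memXc _ _ t t0 s => t.hasR b ∨ t0.hasR b ∨ s.hasR b
  | .memXm _ _ t t0 ta => t.hasR b ∨ t0.hasR b ∨ ta.hasR b
  | .memXmc _ _ t t0 ta s => t.hasR b ∨ t0.hasR b ∨ ta.hasR b ∨ s.hasR b
  | .memF _ _ t1 t2 t3 t4 t5 t6 t7 =>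
      t1.hasR b ∨ t2.hasR b ∨ t3.hasR b ∨ t4.hasR b ∨ t5.hasR b ∨ t6.hasR b ∨ t7.hasR b
  | .memG _ _ t1 t2 t3 t4 t5 t6 t7 =>
      t1.hasR b ∨ t2.hasR b ∨ t3.hasR b ∨ t4.hasR b ∨ t5.hasR b ∨ t6.hasR b ∨ t7.hasR b
  | .box _ φ => φ.hasR b
end

/-- Whether a formula contains a subformula of the form `upd(r, X)`. -/
def Fml.hasUpd (φ : Fml σ) : Prop := φ.hasR true
/-- Whether a formula contains a subformula of the form `upm(r, Ẍ)`. -/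
def Fml.hasUpm (φ : Fml σ) : Prop := φ.hasR false

mutual
/-- Substitution of the term `u` for the first-order variable `x`
(database namespace if `dbNs`, algorithmic namespace otherwise) in a term. -/
def LTerm.subst (dbNs : Bool) (x : ℕ) (u : LTerm σ) : LTerm σ → LTerm σ
  | .var y => if dbNs && (y == x) then u else .var y
  | .avar y => if !dbNs && (y == x) then u else .avar y
  | .dyn f t => .dyn f (LTerm.subst dbNs x u t)
  | .stat g t => .stat g (LTerm.subst dbNs x u t)
  | .rho ρ y t φ =>
      if dbNs && (y == x) then .rho ρ y t φ
      else .rho ρ y (LTerm.subst dbNs x u t) (φ.subst dbNs x u)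
termination_by t => sizeOf t

/-- Substitution of the term `u` for the first-order variable `x` in a formula. -/
def Fml.subst (dbNs : Bool) (x : ℕ) (u : LTerm σ) : Fml σ → Fml σ
  | .eq s t => .eq (LTerm.subst dbNs x u s) (LTerm.subst dbNs x u t)
  | .not φ => .not (φ.subst dbNs x u)
  | .and φ ψ => .and (φ.subst dbNs x u) (ψ.subst dbNs x u)
  | .allDb y φ => if dbNs && (y == x) then .allDb y φ else .allDb y (φ.subst dbNs x u)
  | .allA y φ => if !dbNs && (y == x) then .allA y φ else .allA y (φ.subst dbNs x u)
  | .allM n φ => .allM n (φ.subst dbNs x u)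
  | .allX n φ => .allX n (φ.subst dbNs x u)
  | .allXc n φ => .allXc n (φ.subst dbNs x u)
  | .allXm n φ => .allXm n (φ.subst dbNs x u)
  | .allXmc n φ => .allXmc n (φ.subst dbNs x u)
  | .allF n φ => .allF n (φ.subst dbNs x u)
  | .allG n φ => .allG n (φ.subst dbNs x u)
  | .upd r n => .upd r n
  | .upm r n => .upm r n
  | .memM n s t => .memM n (LTerm.subst dbNs x u s) (LTerm.subst dbNs x u t)
  | .memX n f t t0 => .memX n f (LTerm.subst dbNs x u t) (LTerm.subst dbNs x u t0)
  | .memXc n f t t0 s => .memXc n f (LTerm.subst dbNs x u t) (LTerm.subst dbNs x u t0) (LTerm.subst dbNs x u s)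
  | .memXm n f t t0 ta => .memXm n f (LTerm.subst dbNs x u t) (LTerm.subst dbNs x u t0) (LTerm.subst dbNs x u ta)
  | .memXmc n f t t0 ta s =>
      .memXmc n f (LTerm.subst dbNs x u t) (LTerm.subst dbNs x u t0) (LTerm.subst dbNs x u ta) (LTerm.subst dbNs x u s)
  | .memF n f t1 t2 t3 t4 t5 t6 t7 =>
      .memF n f (LTerm.subst dbNs x u t1) (LTerm.subst dbNs x u t2) (LTerm.subst dbNs x u t3)
        (LTerm.subst dbNs x u t4) (LTerm.subst dbNs x u t5) (LTerm.subst dbNs x u t6) (LTerm.subst dbNs x u t7)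
  | .memG n f t1 t2 t3 t4 t5 t6 t7 =>
      .memG n f (LTerm.subst dbNs x u t1) (LTerm.subst dbNs x u t2) (LTerm.subst dbNs x u t3)
        (LTerm.subst dbNs x u t4) (LTerm.subst dbNs x u t5) (LTerm.subst dbNs x u t6) (LTerm.subst dbNs x u t7)
  | .box n φ => .box n (φ.subst dbNs x u)
termination_by φ => sizeOf φ
end

/-- Substitution `φ[t/x]` for a database variable. -/
def Fml.substDb (x : ℕ) (u : LTerm σ) (φ : Fml σ) : Fml σ := φ.subst true x u
/-- Substitution `φ[t/x]` for an algorithmic variable. -/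
def Fml.substA (x : ℕ) (u : LTerm σ) (φ : Fml σ) : Fml σ := φ.subst false x u
/-- The formula `conUSet(X)` expressing consistency of the update set
represented by the variable `X` (with name `n`). -/
noncomputable def conUSetF (n : ℕ) : Fml σ :=
  Fml.allFdyn fun f =>
    Fml.allA 0 (Fml.allA 1 (Fml.allA 2
      (Fml.imp
        (Fml.and (Fml.memX n f (.avar 0) (.avar 1)) (Fml.memX n f (.avar 0) (.avar 2)))
        (Fml.eq (.avar 1) (.avar 2)))))

/-- The formula `con(r, X) ≡ upd(r, X) ∧ conUSet(X)`. -/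
noncomputable def conF (r : Rule σ) (n : ℕ) : Fml σ := Fml.and (.upd r n) (conUSetF n)

/-- `wcon(r) ≡ ∃X con(r,X)`, with a chosen index for the bound variable. -/
noncomputable def wconN (n : ℕ) (r : Rule σ) : Fml σ := Fml.exX n (conF r n)

/-- Weak consistency `wcon(r)` of a rule. -/
noncomputable def wconF (r : Rule σ) : Fml σ := wconN 0 r

/-- Strong consistency `scon(r)` of a rule. -/
noncomputable def sconF (r : Rule σ) : Fml σ := Fml.allX 0 (Fml.imp (.upd r 0) (conUSetF 0))

/-- The formula expressing that the update set `X` is empty. -/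
noncomputable def emptyXF (n : ℕ) : Fml σ :=
  Fml.allFdyn fun f =>
    Fml.allA 0 (Fml.allA 1 (Fml.not (Fml.memX n f (.avar 0) (.avar 1))))

/-- The formula expressing that the update multiset `Ẍ` is empty. -/
noncomputable def emptyXmF (n : ℕ) : Fml σ :=
  Fml.allFdyn fun f =>
    Fml.allA 0 (Fml.allA 1 (Fml.allA 2 (Fml.not (Fml.memXm n f (.avar 0) (.avar 1) (.avar 2)))))

/-- The formula expressing that the update set `X` (name `xn`) is the
projection of the update multiset `Ẍ` (name `xmn`). -/
noncomputable def projEq (xn xmn : ℕ) : Fml σ :=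
  Fml.allFdyn fun f =>
    Fml.allA 0 (Fml.allA 1
      (Fml.iff (Fml.memX xn f (.avar 0) (.avar 1))
        (Fml.exA 2 (Fml.memXm xmn f (.avar 0) (.avar 1) (.avar 2)))))

/-- `joinable(r₁, r₂)`. -/
noncomputable def joinableF (r₁ r₂ : Rule σ) : Fml σ :=
  Fml.exX 0 (Fml.exX 1 (Fml.and (Fml.and (.upd r₁ 0) (.upd r₂ 1))
    (Fml.allFdyn fun f =>
      Fml.allA 0 (Fml.allA 1 (Fml.allA 2
        (Fml.imp
          (Fml.and (Fml.memX 0 f (.avar 0) (.avar 1)) (Fml.memX 1 f (.avar 0) (.avar 2)))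
          (Fml.eq (.avar 1) (.avar 2))))))))

/-- "`F_f` is a bijection from `Ẍ|_f` to `𝒳̈|_f`" (used in Axiom UM3). -/
def bijF (nXm nXmc nF : ℕ) (f : σ.F) : Fml σ :=
  let X3 : ℕ → ℕ → ℕ → Fml σ := fun a b c =>
    Fml.memXm nXm f (.avar a) (.avar b) (.avar c)
  let Xc4 : ℕ → ℕ → ℕ → ℕ → Fml σ := fun a b c d =>
    Fml.memXmc nXmc f (.avar a) (.avar b) (.avar c) (.avar d)
  let Ff : ℕ → ℕ → ℕ → ℕ → ℕ → ℕ → ℕ → Fml σ := fun a b c d e g h =>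
    Fml.memF nF f (.avar a) (.avar b) (.avar c) (.avar d) (.avar e) (.avar g) (.avar h)
  Fml.allAs [0,1,2,3,4,5,6,7,8,9,10] (Fml.bigAnd [
    Fml.imp (Ff 0 1 2 3 4 5 6) (Fml.and (X3 0 1 2) (Xc4 3 4 5 6)),
    Fml.imp (Fml.and (Ff 0 1 2 3 4 5 6) (Ff 0 1 2 7 8 9 10))
      (Fml.bigAnd [Fml.eq (.avar 3) (.avar 7), Fml.eq (.avar 4) (.avar 8),
        Fml.eq (.avar 5) (.avar 9), Fml.eq (.avar 6) (.avar 10)]),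
    Fml.imp (X3 0 1 2) (Fml.exAs [3,4,5,6] (Ff 0 1 2 3 4 5 6)),
    Fml.imp (Fml.and (Ff 0 1 2 7 8 9 10) (Ff 3 4 5 7 8 9 10))
      (Fml.bigAnd [Fml.eq (.avar 0) (.avar 3), Fml.eq (.avar 1) (.avar 4),
        Fml.eq (.avar 2) (.avar 5)]),
    Fml.imp (Xc4 3 4 5 6) (Fml.exAs [0,1,2] (Ff 0 1 2 3 4 5 6))])

/-- "`G_f` is a bijection from `Ẍ|_f` to `(Ẏ₁ ⊎ Ẏ₂)|_f`" (used in Axiom UM4). -/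
def bijG (nXm nY1 nY2 nG : ℕ) (f : σ.F) : Fml σ :=
  let X3 : ℕ → ℕ → ℕ → Fml σ := fun a b c =>
    Fml.memXm nXm f (.avar a) (.avar b) (.avar c)
  let Y1 : ℕ → ℕ → ℕ → Fml σ := fun a b c =>
    Fml.memXm nY1 f (.avar a) (.avar b) (.avar c)
  let Y2 : ℕ → ℕ → ℕ → Fml σ := fun a b c =>
    Fml.memXm nY2 f (.avar a) (.avar b) (.avar c)
  let Y : ℕ → ℕ → ℕ → Fml σ := fun a b c => Fml.or (Y1 a b c) (Y2 a b c)
  let Gf : ℕ → ℕ → ℕ → ℕ → ℕ → ℕ → ℕ → Fml σ := fun a b c d e g h =>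
    Fml.memG nG f (.avar a) (.avar b) (.avar c) (.avar d) (.avar e) (.avar g) (.avar h)
  Fml.allAs [0,1,2,3,4,5,6,7,8,9,10] (Fml.bigAnd [
    Fml.imp (Gf 0 1 2 3 4 5 6) (Fml.and (X3 0 1 2) (Y 3 4 5)),
    Fml.imp (Fml.and (Gf 0 1 2 3 4 5 6) (Gf 0 1 2 7 8 9 10))
      (Fml.bigAnd [Fml.eq (.avar 3) (.avar 7), Fml.eq (.avar 4) (.avar 8),
        Fml.eq (.avar 5) (.avar 9), Fml.eq (.avar 6) (.avar 10)]),
    Fml.imp (X3 0 1 2) (Fml.exAs [3,4,5,6] (Gf 0 1 2 3 4 5 6)),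
    Fml.imp (Fml.and (Gf 0 1 2 7 8 9 10) (Gf 3 4 5 7 8 9 10))
      (Fml.bigAnd [Fml.eq (.avar 0) (.avar 3), Fml.eq (.avar 1) (.avar 4),
        Fml.eq (.avar 2) (.avar 5)]),
    Fml.imp (Y 3 4 5) (Fml.exAs [0,1,2,6] (Gf 0 1 2 3 4 5 6)),
    Fml.imp (Fml.and (Y1 3 4 5) (Y2 3 4 5))
      (Fml.exAs [0,1,2,6,7,8,9,10] (Fml.bigAnd [
        Fml.not (Fml.bigAnd [Fml.eq (.avar 0) (.avar 7), Fml.eq (.avar 1) (.avar 8),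
          Fml.eq (.avar 2) (.avar 9)]),
        Fml.not (Fml.eq (.avar 6) (.avar 10)),
        Gf 0 1 2 3 4 5 6, Gf 7 8 9 3 4 5 10]))])

/-- The right-hand sides of Axioms U1–U7 for the predicate `upd(r, X)`. -/
noncomputable def updAxRHS : Rule σ → ℕ → Fml σ
  | .assign f t s, n =>
      let i := max t.bnd s.bnd
      Fml.and (Fml.memX n f t.toL s.toL)
        (Fml.and
          (Fml.allA i (Fml.allA (i+1)
            (Fml.imp (Fml.memX n f (.avar i) (.avar (i+1)))
              (Fml.and (Fml.eq (.avar i) t.toL) (Fml.eq (.avar (i+1)) s.toL)))))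
          (Fml.allFdynNe f fun f' =>
            Fml.allA 0 (Fml.allA 1 (Fml.not (Fml.memX n f' (.avar 0) (.avar 1))))))
  | .cond φ r, n =>
      Fml.or (Fml.and φ.toF (.upd r n)) (Fml.and (Fml.not φ.toF) (emptyXF n))
  | .forall_ x φ r, n =>
      let j := max (max φ.bnd r.bnd) (x+1)
      Fml.exXc 0 (Fml.and
        (Fml.allDb x (Fml.and
          (Fml.imp φ.toF (Fml.exX (n+1) (Fml.and (.upd r (n+1))
            (Fml.allFdyn fun f =>
              Fml.allDb j (Fml.allA (j+1)
                (Fml.iff (Fml.memX (n+1) f (.var j) (.avar (j+1)))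
                  (Fml.memXc 0 f (.var j) (.avar (j+1)) (.var x))))))))
          (Fml.imp (Fml.not φ.toF)
            (Fml.allFdyn fun f =>
              Fml.allDb j (Fml.allA (j+1)
                (Fml.not (Fml.memXc 0 f (.var j) (.avar (j+1)) (.var x))))))))
        (Fml.allFdyn fun f =>
          Fml.allDb j (Fml.allA (j+1)
            (Fml.iff (Fml.memX n f (.var j) (.avar (j+1)))
              (Fml.exDb (j+2) (Fml.memXc 0 f (.var j) (.avar (j+1)) (.var (j+2))))))))
  | .par r₁ r₂, n =>
      Fml.exX (n+1) (Fml.exX (n+2)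
        (Fml.and (Fml.and (.upd r₁ (n+1)) (.upd r₂ (n+2)))
          (Fml.allFdyn fun f =>
            Fml.allDb 0 (Fml.allA 1
              (Fml.iff (Fml.memX n f (.var 0) (.avar 1))
                (Fml.or (Fml.memX (n+1) f (.var 0) (.avar 1))
                  (Fml.memX (n+2) f (.var 0) (.avar 1))))))))
  | .choose x φ r, n => Fml.exDb x (Fml.and φ.toF (.upd r n))
  | .seq r₁ r₂, n =>
      Fml.or (Fml.and (.upd r₁ n) (Fml.not (conUSetF n)))
        (Fml.exX (n+1) (Fml.exX (n+2)
          (Fml.and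
            (Fml.and (Fml.and (.upd r₁ (n+1)) (conUSetF (n+1)))
              (.box (n+1) (.upd r₂ (n+2))))
            (Fml.allFdyn fun f =>
              Fml.allDb 0 (Fml.allA 1
                (Fml.iff (Fml.memX n f (.var 0) (.avar 1))
                  (Fml.or
                    (Fml.and (Fml.memX (n+1) f (.var 0) (.avar 1))
                      (Fml.allA 2 (Fml.not (Fml.memX (n+2) f (.var 0) (.avar 2)))))
                    (Fml.memX (n+2) f (.var 0) (.avar 1)))))))))
  | .letr f t ρ r, n =>
      let j := max t.bnd r.bnd
      Fml.exXm 0 (Fml.and (.upm r 0)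
        (Fml.and
          (Fml.allDb j (Fml.allA (j+1)
            (Fml.iff (Fml.memX n f (.var j) (.avar (j+1)))
              (Fml.or
                (Fml.and (Fml.eq t.toL (.var j))
                  (Fml.eq (.avar (j+1))
                    (.rho ρ (j+2) (LTerm.var (j+2))
                      (Fml.exA (j+3)
                        (Fml.memXm 0 f (.var j) (.var (j+2)) (.avar (j+3)))))))
                (Fml.and (Fml.not (Fml.eq t.toL (.var j)))
                  (Fml.exA (j+3) (Fml.memXm 0 f (.var j) (.avar (j+1)) (.avar (j+3)))))))))
          (Fml.allFdynNe f fun f' =>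
            Fml.allDb j (Fml.allA (j+1)
              (Fml.iff (Fml.memX n f' (.var j) (.avar (j+1)))
                (Fml.exA (j+3) (Fml.memXm 0 f' (.var j) (.avar (j+1)) (.avar (j+3)))))))))

/-- The right-hand sides of Axioms UM1–UM7 for the predicate `upm(r, Ẍ)`. -/
noncomputable def upmAxRHS : Rule σ → ℕ → Fml σ
  | .assign f t s, n =>
      let i := max t.bnd s.bnd
      Fml.and
        (Fml.exA i (Fml.and (Fml.memXm n f t.toL s.toL (.avar i))
          (Fml.allDb (i+1) (Fml.allA (i+2) (Fml.allA (i+3)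
            (Fml.imp (Fml.memXm n f (.var (i+1)) (.avar (i+2)) (.avar (i+3)))
              (Fml.bigAnd [Fml.eq (.var (i+1)) t.toL, Fml.eq (.avar (i+2)) s.toL,
                Fml.eq (.avar i) (.avar (i+3))])))))))
        (Fml.allFdynNe f fun f' =>
          Fml.allA 0 (Fml.allA 1 (Fml.allA 2
            (Fml.not (Fml.memXm n f' (.avar 0) (.avar 1) (.avar 2))))))
  | .cond φ r, n =>
      Fml.or (Fml.and φ.toF (.upm r n)) (Fml.and (Fml.not φ.toF) (emptyXmF n))
  | .forall_ x φ r, n =>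
      let j := max (max φ.bnd r.bnd) (x+1)
      Fml.exXmc 0 (Fml.and
        (Fml.allDb x (Fml.and
          (Fml.imp φ.toF (Fml.exXm (n+1) (Fml.and (.upm r (n+1))
            (Fml.allFdyn fun f =>
              Fml.allAs [j, j+1, j+2]
                (Fml.iff (Fml.memXm (n+1) f (.avar j) (.avar (j+1)) (.avar (j+2)))
                  (Fml.memXmc 0 f (.avar j) (.avar (j+1)) (.avar (j+2)) (.var x)))))))
          (Fml.imp (Fml.not φ.toF)
            (Fml.allFdyn fun f =>
              Fml.allAs [j, j+1, j+2]
                (Fml.not (Fml.memXmc 0 f (.avar j) (.avar (j+1)) (.avar (j+2)) (.var x)))))))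
        (Fml.allFdyn fun f =>
          Fml.exF 0 (Fml.and (bijF n 0 0 f)
            (Fml.allAs [0,1,2]
              (Fml.iff (Fml.memXm n f (.avar 0) (.avar 1) (.avar 2))
                (Fml.exAs [3,4]
                  (Fml.memF 0 f (.avar 0) (.avar 1) (.avar 2) (.avar 0) (.avar 1)
                    (.avar 3) (.avar 4))))))))
  | .par r₁ r₂, n =>
      Fml.exXm (n+1) (Fml.exXm (n+2)
        (Fml.and (Fml.and (.upm r₁ (n+1)) (.upm r₂ (n+2)))
          (Fml.allFdyn fun f =>
            Fml.exG 0 (Fml.and (bijG n (n+1) (n+2) 0 f)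
              (Fml.allAs [0,1,2]
                (Fml.iff (Fml.memXm n f (.avar 0) (.avar 1) (.avar 2))
                  (Fml.exAs [3,4]
                    (Fml.memG 0 f (.avar 0) (.avar 1) (.avar 2) (.avar 0) (.avar 1)
                      (.avar 3) (.avar 4)))))))))
  | .choose x φ r, n => Fml.exDb x (Fml.and φ.toF (.upm r n))
  | .seq r₁ r₂, n =>
      Fml.or
        (Fml.and (.upm r₁ n)
          (Fml.allX n (Fml.imp (projEq n n) (Fml.not (conUSetF n)))))
        (Fml.exXm (n+1) (Fml.exXm (n+2)
          (Fml.and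
            (Fml.and (.upm r₁ (n+1))
              (Fml.allX n (Fml.imp (projEq n (n+1))
                (Fml.and (conUSetF n) (.box n (.upm r₂ (n+2)))))))
            (Fml.allFdyn fun f =>
              Fml.allAs [0,1,2]
                (Fml.iff (Fml.memXm n f (.avar 0) (.avar 1) (.avar 2))
                  (Fml.or (Fml.memXm (n+2) f (.avar 0) (.avar 1) (.avar 2))
                    (Fml.and (Fml.memXm (n+1) f (.avar 0) (.avar 1) (.avar 2))
                      (Fml.allAs [3,4]
                        (Fml.not (Fml.memXm (n+2) f (.avar 0) (.avar 3) (.avar 4)))))))))))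
  | .letr f t ρ r, n =>
      let j := max t.bnd r.bnd
      Fml.exXm (n+1) (Fml.exA j (Fml.and (.upm r (n+1))
        (Fml.and
          (Fml.allAs [j+1, j+2, j+3]
            (Fml.iff (Fml.memXm n f (.avar (j+1)) (.avar (j+2)) (.avar (j+3)))
              (Fml.or
                (Fml.and (Fml.not (Fml.eq t.toL (.avar (j+1))))
                  (Fml.memXm (n+1) f (.avar (j+1)) (.avar (j+2)) (.avar (j+3))))
                (Fml.and (Fml.eq t.toL (.avar (j+1)))
                  (Fml.and
                    (Fml.eq (.avar (j+2))
                      (.rho ρ (j+4) (LTerm.var (j+4))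
                        (Fml.exA (j+5)
                          (Fml.memXm (n+1) f (.avar (j+1)) (.var (j+4)) (.avar (j+5))))))
                    (Fml.eq (.avar (j+3)) (.avar j)))))))
          (Fml.allFdynNe f fun f' =>
            Fml.allAs [j+1, j+2, j+3]
              (Fml.iff (Fml.memXm n f' (.avar (j+1)) (.avar (j+2)) (.avar (j+3)))
                (Fml.memXm (n+1) f' (.avar (j+1)) (.avar (j+2)) (.avar (j+3))))))))

/-- `[r]φ ≡ ∀X(upd(r, X) → [X]φ)`, with a chosen name `n` for the bound
variable `X` (to be chosen not free in `φ`). -/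
def boxR (r : Rule σ) (n : ℕ) (φ : Fml σ) : Fml σ :=
  Fml.allX n (Fml.imp (.upd r n) (.box n φ))

/-- `⟨r⟩φ ≡ ∃X(upd(r, X) ∧ [X]φ)`. -/
def diaR (r : Rule σ) (n : ℕ) (φ : Fml σ) : Fml σ :=
  Fml.exX n (Fml.and (.upd r n) (.box n φ))

/-- A state models a formula: the formula is true under every first-order
variable assignment and every (finite) second-order variable assignment. -/
def Satisfies (I : Interp σ B) (φ : Fml σ) : Prop :=
  ∀ (ζ : Asg B) (Ξ : SOAsg σ B), Ξ.Fin → fval I ζ Ξ φ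

/-- Logical consequence `Φ ⊨ φ`. -/
def Conseq (Φ : Set (Fml σ)) (φ : Fml σ) : Prop :=
  ∀ (B : Type) (I : Interp σ B), (∀ ψ ∈ Φ, Satisfies I ψ) → Satisfies I φ

/-- Logical equivalence of formulae: same truth value in every state under
every variable assignment. -/
def FmlEquiv (φ ψ : Fml σ) : Prop :=
  ∀ (B : Type) (I : Interp σ B) (ζ : Asg B) (Ξ : SOAsg σ B), Ξ.Fin →
    (fval I ζ Ξ φ ↔ fval I ζ Ξ ψ)

/-- Equivalence of DB-ASM rules: `S ⊨ ∀X(upd(r₁,X) ↔ upd(r₂,X))` for every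
state `S`. -/
def RuleEquiv (r₁ r₂ : Rule σ) : Prop :=
  ∀ (B : Type) (I : Interp σ B),
    Satisfies I (Fml.allX 0 (Fml.iff (.upd r₁ 0) (.upd r₂ 0)))

/-- A rule is defined if it yields at least one update set in every state. -/
def RuleDefined (r : Rule σ) : Prop :=
  ∀ (B : Type) (I : Interp σ B) (ζ : Asg B), (updSets r I ζ).Nonempty

/-- A rule is deterministic if it yields exactly one update set in every
state under every variable assignment. -/
def RuleDeterministic (r : Rule σ) : Prop :=
  ∀ (B : Type) (I : Interp σ B) (ζ : Asg B), ∃! Δ, Δ ∈ updSets r I ζ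
/-- The proof system 𝔑 of the logic for DB-ASMs: Axioms U1–U7 for
`upd(r, X)`, Axioms UM1–UM7 for `upm(r, Ẍ)`, the modal axioms and rules
M1–M8, Axioms A1–A3, the classical axiom schemes P1–P3 with modus ponens,
the quantifier rules UI, EG, UG, EI, the equality axioms EQ1–EQ3, the
dynamic-logic axiom DY1 and the extensionality axiom E.
`Deriv Φ φ` expresses derivability `Φ ⊢ φ`. -/
inductive Deriv (Φ : Set (Fml σ)) : Fml σ → Prop where
  | hyp {φ : Fml σ} : φ ∈ Φ → Deriv Φ φ
  -- Axioms U1–U7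
  | updAx (r : Rule σ) (n : ℕ) : Deriv Φ (Fml.iff (.upd r n) (updAxRHS r n))
  -- Axioms UM1–UM7
  | upmAx (r : Rule σ) (n : ℕ) : Deriv Φ (Fml.iff (.upm r n) (upmAxRHS r n))
  -- M1 (Distribution Axiom of K)
  | m1 (n : ℕ) (φ ψ : Fml σ) :
      Deriv Φ (Fml.imp (.box n (Fml.imp φ ψ)) (Fml.imp (.box n φ) (.box n ψ)))
  -- M2 (Necessitation)
  | m2 (n : ℕ) {φ : Fml σ} : Deriv Φ φ → Deriv Φ (.box n φ)
  -- M3 (Modus Ponens)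
  | m3 {φ ψ : Fml σ} : Deriv Φ φ → Deriv Φ (Fml.imp φ ψ) → Deriv Φ ψ
  -- M4
  | m4 (n : ℕ) (φ : Fml σ) : Deriv Φ (Fml.imp (Fml.not (conUSetF n)) (.box n φ))
  -- M5
  | m5 (n : ℕ) (φ : Fml σ) : Deriv Φ (Fml.imp (Fml.not (.box n φ)) (.box n (Fml.not φ)))
  -- M6 (Barcan axioms, for first- and second-order quantifiers)
  | m6db (n x : ℕ) (φ : Fml σ) :
      Deriv Φ (Fml.imp (.allDb x (.box n φ)) (.box n (.allDb x φ)))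
  | m6a (n x : ℕ) (φ : Fml σ) :
      Deriv Φ (Fml.imp (.allA x (.box n φ)) (.box n (.allA x φ)))
  | m6m (n k : ℕ) (φ : Fml σ) :
      Deriv Φ (Fml.imp (.allM k (.box n φ)) (.box n (.allM k φ)))
  | m6x (n k : ℕ) (φ : Fml σ) : k ≠ n →
      Deriv Φ (Fml.imp (.allX k (.box n φ)) (.box n (.allX k φ)))
  | m6xc (n k : ℕ) (φ : Fml σ) :
      Deriv Φ (Fml.imp (.allXc k (.box n φ)) (.box n (.allXc k φ)))
  | m6xm (n k : ℕ) (φ : Fml σ) :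
      Deriv Φ (Fml.imp (.allXm k (.box n φ)) (.box n (.allXm k φ)))
  | m6xmc (n k : ℕ) (φ : Fml σ) :
      Deriv Φ (Fml.imp (.allXmc k (.box n φ)) (.box n (.allXmc k φ)))
  | m6f (n k : ℕ) (φ : Fml σ) :
      Deriv Φ (Fml.imp (.allF k (.box n φ)) (.box n (.allF k φ)))
  | m6g (n k : ℕ) (φ : Fml σ) :
      Deriv Φ (Fml.imp (.allG k (.box n φ)) (.box n (.allG k φ)))
  -- M7 and M8 (static and pure formulae)
  | m7 (r : Rule σ) (n : ℕ) {φ : Fml σ} : φ.isStatic → φ.isPure →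
      Deriv Φ (Fml.imp (Fml.and (conF r n) φ) (.box n φ))
  | m8 (r : Rule σ) (n : ℕ) {φ : Fml σ} : φ.isStatic → φ.isPure →
      Deriv Φ (Fml.imp (Fml.and (conF r n) (.box n φ)) φ)
  -- A1, A2, A3
  | a1 (n : ℕ) (f : σ.F) (x y : ℕ) :
      Deriv Φ (Fml.imp
        (Fml.and (conUSetF n)
          (Fml.and
            (Fml.allA (max x y + 1)
              (Fml.not (Fml.memX n f (.avar x) (.avar (max x y + 1)))))
            (Fml.eq (.dyn f (.avar x)) (.avar y))))
        (.box n (Fml.eq (.dyn f (.avar x)) (.avar y))))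
  | a2 (n : ℕ) (f : σ.F) (x y : ℕ) :
      Deriv Φ (Fml.imp (Fml.and (conUSetF n) (Fml.memX n f (.avar x) (.avar y)))
        (.box n (Fml.eq (.dyn f (.avar x)) (.avar y))))
  | a3 (r : Rule σ) (m n : ℕ) :
      Deriv Φ (Fml.imp (.upm r m) (Fml.exX n (.upd r n)))
  -- P1–P3
  | p1 (φ ψ : Fml σ) : Deriv Φ (Fml.imp φ (Fml.imp ψ φ))
  | p2 (φ ψ χ : Fml σ) :
      Deriv Φ (Fml.imp (Fml.imp φ (Fml.imp ψ χ))
        (Fml.imp (Fml.imp φ ψ) (Fml.imp φ χ)))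
  | p3 (φ ψ : Fml σ) :
      Deriv Φ (Fml.imp (Fml.imp (Fml.not φ) (Fml.not ψ)) (Fml.imp ψ φ))
  -- UI (Universal Instantiation)
  | uiDb {φ : Fml σ} (x : ℕ) (t : LTerm σ) : (φ.isPure ∨ t.isStatic) →
      Deriv Φ (.allDb x φ) → Deriv Φ (φ.substDb x t)
  | uiA {φ : Fml σ} (x : ℕ) (t : LTerm σ) : (φ.isPure ∨ t.isStatic) →
      Deriv Φ (.allA x φ) → Deriv Φ (φ.substA x t)
  -- EG (Existential Generalisation)
  | egDb {φ : Fml σ} (x : ℕ) (t : LTerm σ) : (φ.isPure ∨ t.isStatic) →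
      Deriv Φ (φ.substDb x t) → Deriv Φ (Fml.exDb x φ)
  | egA {φ : Fml σ} (x : ℕ) (t : LTerm σ) : (φ.isPure ∨ t.isStatic) →
      Deriv Φ (φ.substA x t) → Deriv Φ (Fml.exA x φ)
  -- UG (Universal Generalisation, an ω-rule over static terms)
  | ugDb {φ : Fml σ} (x : ℕ) :
      (∀ t : LTerm σ, t.isStatic → Deriv Φ (φ.substDb x t)) →
      Deriv Φ (.allDb x φ)
  | ugA {φ : Fml σ} (x : ℕ) :
      (∀ t : LTerm σ, t.isStatic → Deriv Φ (φ.substA x t)) →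
      Deriv Φ (.allA x φ)
  -- EI (Existential Instantiation: `t` represents a valuation for `x`
  -- satisfying `φ`)
  | eiDb {φ : Fml σ} (x : ℕ) (t : LTerm σ) : (φ.isPure ∨ t.isStatic) →
      (∀ (B : Type) (I : Interp σ B) (ζ : Asg B) (Ξ : SOAsg σ B), Ξ.Fin →
        (∀ ψ ∈ Φ, fval I ζ Ξ ψ) → fval I ζ Ξ (Fml.exDb x φ) →
        fval I ζ Ξ (φ.substDb x t)) →
      Deriv Φ (Fml.exDb x φ) → Deriv Φ (φ.substDb x t)
  | eiA {φ : Fml σ} (x : ℕ) (t : LTerm σ) : (φ.isPure ∨ t.isStatic) →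
      (∀ (B : Type) (I : Interp σ B) (ζ : Asg B) (Ξ : SOAsg σ B), Ξ.Fin →
        (∀ ψ ∈ Φ, fval I ζ Ξ ψ) → fval I ζ Ξ (Fml.exA x φ) →
        fval I ζ Ξ (φ.substA x t)) →
      Deriv Φ (Fml.exA x φ) → Deriv Φ (φ.substA x t)
  -- EQ1–EQ3 (equality axioms, restricted to static terms)
  | eqRefl (t : LTerm σ) : t.isStatic → Deriv Φ (.eq t t)
  | eqFunD (f : σ.F) (t₁ t₂ : LTerm σ) : t₁.isStatic → t₂.isStatic →
      Deriv Φ (Fml.imp (.eq t₁ t₂) (.eq (.dyn f t₁) (.dyn f t₂)))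
  | eqFunS (g : σ.Stat) (t₁ t₂ : LTerm σ) : t₁.isStatic → t₂.isStatic →
      Deriv Φ (Fml.imp (.eq t₁ t₂) (.eq (.stat g t₁) (.stat g t₂)))
  | eqRho (ρ : σ.Rho) (x : ℕ) (t₁ t₂ : LTerm σ) (φ₁ φ₂ : Fml σ) :
      t₁.isStatic → t₂.isStatic → φ₁.isPure → φ₂.isPure →
      Deriv Φ (Fml.imp (Fml.and (.eq t₁ t₂) (Fml.iff φ₁ φ₂))
        (.eq (.rho ρ x t₁ φ₁) (.rho ρ x t₂ φ₂)))
  -- DY1 (dynamic-logic axiom for sequence rules)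
  | dy1 (r₁ r₂ : Rule σ) (φ : Fml σ) (n n₁ n₂ : ℕ) :
      n ∉ φ.freeX → n₁ ∉ φ.freeX → n₂ ∉ φ.freeX → n₁ ≠ n₂ →
      Deriv Φ (Fml.iff
        (Fml.exX n (Fml.and (.upd (.seq r₁ r₂) n) (.box n φ)))
        (Fml.exX n₁ (Fml.and (.upd r₁ n₁)
          (.box n₁ (Fml.exX n₂ (Fml.and (.upd r₂ n₂) (.box n₂ φ)))))))
  -- E (extensionality axiom)
  | ext (r₁ r₂ : Rule σ) (φ : Fml σ) (n₁ n₂ : ℕ) :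
      n₁ ≠ n₂ → n₁ ∉ φ.freeX → n₂ ∉ φ.freeX → RuleEquiv r₁ r₂ →
      Deriv Φ (Fml.exX n₁ (Fml.exX n₂ (Fml.iff
        (Fml.and (.upd r₁ n₁) (.box n₁ φ))
        (Fml.and (.upd r₂ n₂) (.box n₂ φ)))))

/-! Seen location by location, `Δ₁ ⊘ Δ₂` takes its values from `Δ₂` wherever `Δ₂` has some, and from
`Δ₁` elsewhere. Hence `⊘` is associative, `S + (Δ₁ ⊘ Δ₂) = (S + Δ₁) + Δ₂`, and for consistent `Δ₁`
the set `Δ₁ ⊘ Δ₂` is consistent exactly when `Δ₂` is. A sequence rule is then the composition of its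
parts in the manner of a monad, with inconsistent update sets as exceptions, and its associativity
is that of monadic composition. The laws for parallel rules are those of `∪`, lifted elementwise. -/

/-- The values that an update set assigns to the location `(f, a)`: none, one, or several
conflicting ones. Update sets are compared, composed and checked for consistency through them. -/
def valuesAt (Δ : USet σ B) (f : σ.F) (a : B) : Set B := {b | (f, a, b) ∈ Δ}

theorem eq_of_forall_valuesAt_eq {Δ Δ' : USet σ B}
    (h : ∀ f a, valuesAt Δ f a = valuesAt Δ' f a) : Δ = Δ' :=
  Set.ext fun ⟨f, a, b⟩ => Set.ext_iff.1 (h f a) b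

theorem consistentU_iff_subsingleton {Δ : USet σ B} :
    consistentU Δ ↔ ∀ f a, (valuesAt Δ f a).Subsingleton :=
  ⟨fun h f a b hb b' hb' => h f a b b' hb hb', fun h f a _ _ hb hb' => h f a hb hb'⟩

section SeqComp

variable {Δ₁ Δ₂ : USet σ B} {f : σ.F} {a : B}

theorem valuesAt_seqComp_of_nonempty (h : (valuesAt Δ₂ f a).Nonempty) :
    valuesAt (seqComp Δ₁ Δ₂) f a = valuesAt Δ₂ f a := by
  obtain ⟨c, hc⟩ := h
  exact Set.Subset.antisymm (fun _ hb => hb.resolve_right fun hb₁ => hb₁.2 c hc) fun _ hb => .inl hb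

theorem valuesAt_seqComp_of_eq_empty (h : valuesAt Δ₂ f a = ∅) :
    valuesAt (seqComp Δ₁ Δ₂) f a = valuesAt Δ₁ f a := by
  have hΔ₂ : ∀ b, (f, a, b) ∉ Δ₂ := Set.eq_empty_iff_forall_notMem.1 h
  exact Set.Subset.antisymm (fun b hb => (hb.resolve_left (hΔ₂ b)).1) fun _ hb => .inr ⟨hb, hΔ₂⟩

theorem seqComp_assoc (Δ₁ Δ₂ Δ₃ : USet σ B) :
    seqComp (seqComp Δ₁ Δ₂) Δ₃ = seqComp Δ₁ (seqComp Δ₂ Δ₃) := by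
  refine eq_of_forall_valuesAt_eq fun f a => ?_
  rcases (valuesAt Δ₃ f a).eq_empty_or_nonempty with h₃ | h₃
  · have h₂₃ : valuesAt (seqComp Δ₂ Δ₃) f a = valuesAt Δ₂ f a := valuesAt_seqComp_of_eq_empty h₃
    rw [valuesAt_seqComp_of_eq_empty h₃]
    rcases (valuesAt Δ₂ f a).eq_empty_or_nonempty with h₂ | h₂
    · rw [valuesAt_seqComp_of_eq_empty h₂, valuesAt_seqComp_of_eq_empty (h₂₃.trans h₂)]
    · rw [valuesAt_seqComp_of_nonempty h₂, valuesAt_seqComp_of_nonempty (h₂₃ ▸ h₂), h₂₃]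
  · have h₂₃ : valuesAt (seqComp Δ₂ Δ₃) f a = valuesAt Δ₃ f a := valuesAt_seqComp_of_nonempty h₃
    rw [valuesAt_seqComp_of_nonempty h₃, valuesAt_seqComp_of_nonempty (h₂₃ ▸ h₃), h₂₃]

theorem consistentU_seqComp_iff (h₁ : consistentU Δ₁) :
    consistentU (seqComp Δ₁ Δ₂) ↔ consistentU Δ₂ := by
  simp only [consistentU_iff_subsingleton] at h₁ ⊢
  refine forall₂_congr fun f a => ?_
  rcases (valuesAt Δ₂ f a).eq_empty_or_nonempty with h₂ | h₂
  · rw [valuesAt_seqComp_of_eq_empty h₂, h₂]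
    exact iff_of_true (h₁ f a) Set.subsingleton_empty
  · rw [valuesAt_seqComp_of_nonempty h₂]

end SeqComp

namespace Interp

theorem apply_dyn_of_eq_empty (I : Interp σ B) {Δ : USet σ B} {f : σ.F} {a : B}
    (h : valuesAt Δ f a = ∅) : (I.apply Δ).dyn f a = I.dyn f a :=
  dif_neg (Set.not_nonempty_iff_eq_empty.2 h)

-- `Interp.apply` resolves conflicting updates by choice from the set of candidate values, and equal
-- sets of candidates yield the same choice.
theorem apply_dyn_congr {I J : Interp σ B} {Δ Δ' : USet σ B} {f : σ.F} {a : B}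
    (h : valuesAt Δ f a = valuesAt Δ' f a) (hIJ : valuesAt Δ f a = ∅ → I.dyn f a = J.dyn f a) :
    (I.apply Δ).dyn f a = (J.apply Δ').dyn f a := by
  rcases (valuesAt Δ f a).eq_empty_or_nonempty with h₀ | h₀
  · rw [apply_dyn_of_eq_empty I h₀, apply_dyn_of_eq_empty J (h ▸ h₀), hIJ h₀]
  · have hmem : ∀ b, (f, a, b) ∈ Δ ↔ (f, a, b) ∈ Δ' := Set.ext_iff.1 h
    have hex : ∃ b, (f, a, b) ∈ Δ' := h₀.imp fun b => (hmem b).1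
    simp only [Interp.apply, hmem, hex, dite_true]

theorem apply_seqComp (I : Interp σ B) (Δ₁ Δ₂ : USet σ B) :
    I.apply (seqComp Δ₁ Δ₂) = (I.apply Δ₁).apply Δ₂ := by
  suffices h : (I.apply (seqComp Δ₁ Δ₂)).dyn = ((I.apply Δ₁).apply Δ₂).dyn from
    congrArg (fun d => { I with dyn := d }) h
  funext f a
  rcases (valuesAt Δ₂ f a).eq_empty_or_nonempty with h₂ | h₂
  · rw [apply_dyn_of_eq_empty _ h₂]
    exact apply_dyn_congr (valuesAt_seqComp_of_eq_empty h₂) fun _ => rfl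
  · have h : valuesAt (seqComp Δ₁ Δ₂) f a = valuesAt Δ₂ f a := valuesAt_seqComp_of_nonempty h₂
    exact apply_dyn_congr h fun h₀ => absurd (h.symm.trans h₀) h₂.ne_empty

end Interp

theorem updSets_par (r₁ r₂ : Rule σ) (I : Interp σ B) (ζ : Asg B) :
    updSets (.par r₁ r₂) I ζ = Set.image2 (· ∪ ·) (updSets r₁ I ζ) (updSets r₂ I ζ) := by
  ext Δ
  simp only [updSets, Set.mem_image2, Set.mem_ofPred_eq, eq_comm]

theorem updSets_par_comm (r₁ r₂ : Rule σ) (I : Interp σ B) (ζ : Asg B) :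
    updSets (.par r₁ r₂) I ζ = updSets (.par r₂ r₁) I ζ := by
  simpa only [updSets_par] using Set.image2_comm Set.union_comm

theorem updSets_par_assoc (r₁ r₂ r₃ : Rule σ) (I : Interp σ B) (ζ : Asg B) :
    updSets (.par (.par r₁ r₂) r₃) I ζ = updSets (.par r₁ (.par r₂ r₃)) I ζ := by
  simpa only [updSets_par] using Set.image2_assoc Set.union_assoc

section Continuations

open Classical in
/-- The possible outcomes `Δ ⊘ Δ'` of continuing an update set `Δ`, yielded in the state `I`, by a
computation that yields the update sets `Δ' ∈ Q J` in each state `J`. As in the sequence rule, an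
inconsistent `Δ` is not continued and is the only outcome. -/
noncomputable def continuations (Q : Interp σ B → Set (USet σ B)) (I : Interp σ B)
    (Δ : USet σ B) : Set (USet σ B) :=
  if consistentU Δ then seqComp Δ '' Q (I.apply Δ) else {Δ}

variable (Q R : Interp σ B → Set (USet σ B)) (I : Interp σ B)

theorem continuations_of_consistentU {Δ : USet σ B} (h : consistentU Δ) :
    continuations Q I Δ = seqComp Δ '' Q (I.apply Δ) :=
  if_pos h

theorem continuations_of_not_consistentU {Δ : USet σ B} (h : ¬ consistentU Δ) :
    continuations Q I Δ = {Δ} :=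
  if_neg h

theorem mem_continuations {Δ Δ' : USet σ B} :
    Δ' ∈ continuations Q I Δ ↔
      consistentU Δ ∧ (∃ Δ₂ ∈ Q (I.apply Δ), seqComp Δ Δ₂ = Δ') ∨ ¬ consistentU Δ ∧ Δ' = Δ := by
  by_cases h : consistentU Δ
  · simp only [continuations_of_consistentU Q I h, h, Set.mem_image, true_and, not_true_eq_false,
      false_and, or_false]
  · simp only [continuations_of_not_consistentU Q I h, h, Set.mem_singleton_iff, false_and,
      not_false_eq_true, true_and, false_or]

theorem continuations_seqComp {Δ₁ : USet σ B} (h₁ : consistentU Δ₁) (Δ₂ : USet σ B) :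
    continuations R I (seqComp Δ₁ Δ₂) = seqComp Δ₁ '' continuations R (I.apply Δ₁) Δ₂ := by
  by_cases h₂ : consistentU Δ₂
  · rw [continuations_of_consistentU _ _ ((consistentU_seqComp_iff h₁).2 h₂),
      continuations_of_consistentU _ _ h₂, I.apply_seqComp, Set.image_image]
    simp only [seqComp_assoc]
  · rw [continuations_of_not_consistentU _ _ (mt (consistentU_seqComp_iff h₁).1 h₂),
      continuations_of_not_consistentU _ _ h₂, Set.image_singleton]

theorem biUnion_continuations (Δ : USet σ B) :
    ⋃ Δ' ∈ continuations Q I Δ, continuations R I Δ' =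
      continuations (fun J => ⋃ Δ' ∈ Q J, continuations R J Δ') I Δ := by
  by_cases h : consistentU Δ
  · simp only [continuations_of_consistentU _ I h, Set.biUnion_image, Set.image_iUnion₂,
      continuations_seqComp R I h]
  · simp only [continuations_of_not_consistentU _ I h, Set.biUnion_singleton]

end Continuations

theorem updSets_seq (r₁ r₂ : Rule σ) (I : Interp σ B) (ζ : Asg B) :
    updSets (.seq r₁ r₂) I ζ =
      ⋃ Δ ∈ updSets r₁ I ζ, continuations (fun J => updSets r₂ J ζ) I Δ := by
  ext Δ'
  simp only [updSets, Set.mem_union, Set.mem_ofPred_eq, Set.mem_iUnion, exists_prop,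
    mem_continuations]
  grind

theorem updSets_seq_assoc (r₁ r₂ r₃ : Rule σ) (I : Interp σ B) (ζ : Asg B) :
    updSets (.seq (.seq r₁ r₂) r₃) I ζ = updSets (.seq r₁ (.seq r₂ r₃)) I ζ := by
  simp only [updSets_seq, Set.biUnion_iUnion, biUnion_continuations]

theorem fval_iff (I : Interp σ B) (ζ : Asg B) (Ξ : SOAsg σ B) (φ ψ : Fml σ) :
    fval I ζ Ξ (φ.iff ψ) ↔ (fval I ζ Ξ φ ↔ fval I ζ Ξ ψ) := by
  simp only [Fml.iff, Fml.imp, fval]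
  tauto

theorem ruleEquiv_of_updSets_eq {r r' : Rule σ}
    (h : ∀ (B : Type) (I : Interp σ B) (ζ : Asg B), updSets r I ζ = updSets r' I ζ) :
    RuleEquiv r r' := by
  intro B I ζ Ξ _
  simp only [fval, fval_iff, h, implies_true]

/-- Parallel composition of DB-ASM rules is commutative and
associative, and sequential composition is associative, with respect to rule
equivalence `r₁ ≡ r₂` (i.e. `S ⊨ ∀X(upd(r₁,X) ↔ upd(r₂,X))` for every state `S`). -/
theorem composition_properties {σ : Sig} (r₁ r₂ r₃ : Rule σ) :
    RuleEquiv (.par r₁ r₂) (.par r₂ r₁) ∧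
    RuleEquiv (.par (.par r₁ r₂) r₃) (.par r₁ (.par r₂ r₃)) ∧
    RuleEquiv (.seq (.seq r₁ r₂) r₃) (.seq r₁ (.seq r₂ r₃)) :=
  ⟨ruleEquiv_of_updSets_eq fun _ => updSets_par_comm r₁ r₂,
    ruleEquiv_of_updSets_eq fun _ => updSets_par_assoc r₁ r₂ r₃,
    ruleEquiv_of_updSets_eq fun _ => updSets_seq_assoc r₁ r₂ r₃⟩

end DBASM
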